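/- Let A be an algebra with a linear functional tr^Q whose Hochschild coboundary satisfies tr^Q([a,b]) = −(1/q) res(a[b, L]) where L = log Q and res is a trace vanishing on appropriate elements and cyclic. Let F : X → A be smooth with F² = 1 and set ω^Q_{2j} = tr^Q(F(dF)^{2j}). Then dω^Q_{2j} = (1/(2q)) res([L, F](dF)^{2j+1} F). In particular dω^Q_{2j} is expressed purely through res and hence vanishes whenever [L,F](dF)^{2j+1}F lies in the kernel of res. -/

import Mathlib

/-!
Write `W = (dF)^(2j+1)`.  Powers of the closed form `dF` are closed, so the left-hand side is
`tr^Q(W)`.  Differentiating `F² = 1` shows that `F` anticommutes with `dF`, hence with the odd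
power `W`, so `F W F = -W` while `F F W = W`.  The coboundary formula for the pair `(F W, F)`
therefore reads `-2 tr^Q(W) = -(1/q) res(F W [F, L])`, and the cyclicity of `res` together with
`F W = -W F` turns the residue into `res([L, F] W F)`.
-/

/-- An element anticommuting with `x` anticommutes with every odd power of `x`. -/
theorem mul_odd_pow_of_anticomm {B : Type*} [Ring B] {F x : B} (h : F * x = -(x * F)) (j : ℕ) :
    F * x ^ (2 * j + 1) = -(x ^ (2 * j + 1) * F) := by
  have hx : SemiconjBy F x (-x) := by
    simpa [SemiconjBy] using h
  have := (hx.pow_right (2 * j + 1)).eq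
  rwa [Odd.neg_pow ⟨j, rfl⟩, neg_mul] at this

theorem stmt18 {Ω B : Type*} [AddCommGroup Ω] [Module ℂ Ω] [Ring B] [Algebra ℂ B]
    (deg : ℕ → Submodule ℂ B)
    (hone : (1 : B) ∈ deg 0)
    (hdegmul : ∀ (m n : ℕ), ∀ x ∈ deg m, ∀ y ∈ deg n, x * y ∈ deg (m + n))
    (dΩ : Ω →ₗ[ℂ] Ω) (dB : B →ₗ[ℂ] B) (trQ res : B →ₗ[ℂ] Ω)
    (hd2 : ∀ x : B, dB (dB x) = 0)
    (hddeg : ∀ (m : ℕ), ∀ x ∈ deg m, dB x ∈ deg (m + 1))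
    (hleib : ∀ (m : ℕ), ∀ x ∈ deg m, ∀ y : B,
      dB (x * y) = dB x * y + ((-1 : ℂ) ^ m) • (x * dB y))
    (hdtrQ : ∀ x : B, dΩ (trQ x) = trQ (dB x))
    (q : ℝ) (hq : 0 < q) (L : B) (hL : L ∈ deg 0)
    -- the Hochschild coboundary of `tr^Q` is the residue of `a [b, log Q]`
    (hcob : ∀ (m n : ℕ), ∀ a ∈ deg m, ∀ b ∈ deg n,
      trQ (a * b) - ((-1 : ℂ) ^ (m * n)) • trQ (b * a) =
        -((q⁻¹ : ℝ) : ℂ) • res (a * (b * L - L * b)))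
    -- `res` is a graded-cyclic trace
    (hrescyc : ∀ (m n : ℕ), ∀ a ∈ deg m, ∀ b ∈ deg n,
      res (a * b) = ((-1 : ℂ) ^ (m * n)) • res (b * a))
    (F : B) (hF : F ∈ deg 0) (hF2 : F * F = 1)
    (j : ℕ) :
    dΩ (trQ (F * (dB F) ^ (2 * j))) =
      (((2 * q)⁻¹ : ℝ) : ℂ) • res ((L * F - F * L) * (dB F) ^ (2 * j + 1) * F) := by
  have hd1 : dB 1 = 0 := by simpa using hleib 0 1 hone 1
  have hdF : dB F ∈ deg 1 := hddeg 0 F hF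
  have hpow : ∀ k : ℕ, dB F ^ k ∈ deg k := by
    intro k
    induction k with
    | zero => simpa using hone
    | succ k ih => rw [pow_succ]; exact hdegmul k 1 _ ih _ hdF
  have hclosed : ∀ k : ℕ, dB (dB F ^ k) = 0 := by
    intro k
    induction k with
    | zero => simpa using hd1
    | succ k ih => rw [pow_succ, hleib k _ (hpow k), ih, hd2]; simp
  have hanti : F * dB F = -(dB F * F) := by
    have h := hleib 0 F hF F
    rw [hF2, hd1, pow_zero, one_smul] at h
    exact eq_neg_of_add_eq_zero_right h.symm
  have hFW := mul_odd_pow_of_anticomm hanti j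
  have hdω : dB (F * dB F ^ (2 * j)) = dB F ^ (2 * j + 1) := by
    rw [hleib 0 F hF, hclosed, pow_succ' (dB F)]; simp
  have hW := hpow (2 * j + 1)
  rw [hdtrQ, hdω]
  generalize dB F ^ (2 * j + 1) = W at hFW hW ⊢
  have hFWdeg : F * W ∈ deg (2 * j + 1) := by simpa using hdegmul 0 _ F hF W hW
  have hcomm : F * L - L * F ∈ deg 0 :=
    sub_mem (by simpa using hdegmul 0 0 F hF L hL) (by simpa using hdegmul 0 0 L hL F hF)
  have hFWF : F * W * F = -W := by rw [hFW, neg_mul, mul_assoc, hF2, mul_one]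
  have hres : res (F * W * (F * L - L * F)) = res ((L * F - F * L) * W * F) := by
    rw [hrescyc _ 0 _ hFWdeg _ hcomm, mul_zero, pow_zero, one_smul, hFW]
    congr 1
    noncomm_ring
  have h := hcob _ 0 _ hFWdeg F hF
  rw [hres, hFWF, ← mul_assoc, hF2, one_mul, mul_zero, pow_zero, one_smul, map_neg] at h
  have h2 : (2 : ℂ) • trQ W = ((q⁻¹ : ℝ) : ℂ) • res ((L * F - F * L) * W * F) := by
    rw [neg_smul] at h
    rw [← neg_inj, ← h, two_smul]
    abel
  rw [mul_inv, Complex.ofReal_mul, mul_smul, ← h2, smul_smul]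
  norm_num
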